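/- Let Γ = (V,E) be a finite simplicial graph with an edge labeling ψ : E → {2,3,4,...}. If Γ is a cycle of length greater than 3, then the Coxeter group C(Γ) is coherent. -/

import Mathlib

def Group.Slender (G : Type*) [Group G] : Prop := ∀ H : Subgroup G, H.FG

def Group.FinitelyPresented (G : Type*) [Group G] : Prop :=
  ∃ (n : ℕ) (rels : Set (FreeGroup (Fin n))), rels.Finite ∧ Nonempty (PresentedGroup rels ≃* G)

def Group.Coherent (G : Type*) [Group G] : Prop :=
  ∀ H : Subgroup G, H.FG → Group.FinitelyPresented H

def SimpleGraph.NoInducedCycleGT3 {V : Type*} (Γ : SimpleGraph V) : Prop :=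
  ∀ n : ℕ, 4 ≤ n → IsEmpty (SimpleGraph.cycleGraph n ↪g Γ)

/-- The restriction of a Coxeter matrix to a set of indices
(corresponding to an induced subgraph of the Coxeter graph). -/
def CoxeterMatrix.restrict {V : Type*} (M : CoxeterMatrix V) (S : Set V) : CoxeterMatrix S where
  M a b := M a b
  isSymm := Matrix.IsSymm.ext fun a b => M.isSymm.apply a b
  diagonal a := M.diagonal a
  off_diagonal a b h := M.off_diagonal a b (fun hc => h (Subtype.ext hc))

/-- `M` is the Coxeter matrix associated to the simplicial graph `Γ` with edge labeling
`ψ : E → {2,3,4,...}` (recorded by the values of `M` on adjacent pairs): non-adjacent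
distinct vertices get the label `0` (that is, `∞`: no relation). -/
def CoxeterMatrix.IsMatrixOf {V : Type*} (M : CoxeterMatrix V) (Γ : SimpleGraph V) : Prop :=
  (∀ v w, Γ.Adj v w → 2 ≤ M v w) ∧ (∀ v w, v ≠ w → ¬Γ.Adj v w → M v w = 0)


open Relation

/-- Products of alternating words (read from the right). -/
inductive AmRed {ι G : Type*} [Group G] (A : ι → Subgroup G) (C : Subgroup G) :
    Option ι → G → Prop
  | base (c : G) (hc : c ∈ C) : AmRed A C none c
  | step (o : Option ι) (g : G) (i : ι) (a : G) (h : AmRed A C o g) (ho : o ≠ some i)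
      (ha : a ∈ A i) (hac : a ∉ C) : AmRed A C (some i) (a * g)

/-- `G` is (internally) the amalgam of the subgroups `A i` along `C`. -/
structure IsAmalgam {ι G : Type*} [Group G] (A : ι → Subgroup G) (C : Subgroup G) : Prop where
  le : ∀ i, C ≤ A i
  gen : ⨆ i, A i = ⊤
  red : ∀ i g, AmRed A C (some i) g → g ∉ C

/-- Reduced chains, ending at `y0`. -/
inductive RChain {ι G Y : Type*} [Group G] (C : Subgroup G) (p : Y → G) (r : ι → Y → Y → Prop)
    (y0 : Y) : Option ι → Y → Prop
  | nil (y : Y) (h : ∀ i, r i y y0) (hp : (p y)⁻¹ * p y0 ∈ C) : RChain C p r y0 none y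
  | step (o : Option ι) (y y' : Y) (i : ι) (h : RChain C p r y0 o y) (ho : o ≠ some i)
      (hr : r i y' y) (hp : (p y')⁻¹ * p y ∉ C) : RChain C p r y0 (some i) y'

section core
variable {ι G Y : Type*} [Group G] {A : ι → Subgroup G} {C : Subgroup G} {p : Y → G}
  {r : ι → Y → Y → Prop} {y0 : Y}

theorem RChain.amRed (hrA : ∀ i y y', r i y y' → (p y)⁻¹ * p y' ∈ A i)
    {o : Option ι} {y : Y} (h : RChain C p r y0 o y) :
    AmRed A C o ((p y)⁻¹ * p y0) := by
  induction h with
  | nil y h hp => exact .base _ hp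
  | step o y y' i h ho hr hp ih =>
    have := AmRed.step o _ i _ ih ho (hrA _ _ _ hr) hp
    convert this using 1
    group

theorem RChain.absorb (htr : ∀ i y y' y'', r i y y' → r i y' y'' → r i y y'')
    {o : Option ι} {y y' : Y} (h : RChain C p r y0 o y)
    (h1 : ∀ i, r i y' y) (h2 : (p y')⁻¹ * p y ∈ C) : RChain C p r y0 o y' := by
  cases h with
  | nil _ h hp =>
    refine .nil _ (fun i => htr _ _ _ _ (h1 i) (h i)) ?_
    have := mul_mem h2 hp
    convert this using 1
    group
  | step o y1 _ i h ho hr hp =>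
    refine .step o y1 _ i h ho (htr _ _ _ _ (h1 i) hr) ?_
    intro hc
    apply hp
    have := mul_mem (inv_mem h2) hc
    convert this using 1
    group

theorem RChain.snoc (htr : ∀ i y y' y'', r i y y' → r i y' y'' → r i y y'')
    (hLI : ∀ i y y', r i y y' → (p y)⁻¹ * p y' ∈ C → ∀ j, r j y y')
    {o : Option ι} {y y' : Y} (h : RChain C p r y0 o y) {i : ι} (h1 : r i y' y) :
    ∃ o', RChain C p r y0 o' y' := by
  by_cases hc : (p y')⁻¹ * p y ∈ C
  · exact ⟨o, h.absorb htr (hLI _ _ _ h1 hc) hc⟩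
  by_cases ho : o = some i
  · subst ho
    cases h with
    | step o1 y1 _ _ h ho hr hp =>
      have h2 := htr _ _ _ _ h1 hr
      by_cases hc' : (p y')⁻¹ * p y1 ∈ C
      · exact ⟨o1, h.absorb htr (hLI _ _ _ h2 hc') hc'⟩
      · exact ⟨_, .step o1 y1 _ i h ho h2 hc'⟩
  · exact ⟨_, .step o y _ i h ho h1 hc⟩

theorem core_rel (hA : IsAmalgam A C)
    (hrA : ∀ i y y', r i y y' → (p y)⁻¹ * p y' ∈ A i)
    (htr : ∀ i y y' y'', r i y y' → r i y' y'' → r i y y'')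
    (hLI : ∀ i y y', r i y y' → (p y)⁻¹ * p y' ∈ C → ∀ j, r j y y')
    (hrefl : ∀ i, r i y0 y0)
    {y : Y} (hy : ReflTransGen (fun a b => ∃ i, r i a b) y y0) (hp : (p y)⁻¹ * p y0 ∈ C) :
    ∀ i, r i y y0 := by
  have : ∃ o, RChain C p r y0 o y := by
    clear hp
    induction hy using ReflTransGen.head_induction_on with
    | refl => exact ⟨none, .nil _ hrefl (by simp)⟩
    | head h _ ih =>
      obtain ⟨i, hi⟩ := h
      obtain ⟨o, ho⟩ := ih
      exact ho.snoc htr hLI hi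
  obtain ⟨o, ho⟩ := this
  cases o with
  | some i => exact absurd hp (hA.red i _ (ho.amRed hrA))
  | none =>
    cases ho with
    | nil _ h hp => exact h

end core

section reps
variable {G : Type*} [Group G]

theorem exists_rep (H S : Subgroup G) : ∃ (rep α : G → G), (∀ g, α g ∈ H) ∧
    (∀ g, (rep g)⁻¹ * (α g)⁻¹ * g ∈ S) ∧
    (∀ g, ∀ h ∈ H, ∀ s ∈ S, rep (h * g * s) = rep g) := by
  let rep : G → G := fun g => (DoubleCoset.mk H S g).out
  have h1 : ∀ g, ∃ h ∈ H, ∃ s ∈ S, g = h * rep g * s := by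
    intro g
    obtain ⟨h, k, hh, hk, e⟩ := DoubleCoset.mk_out_eq_mul H S g
    refine ⟨h⁻¹, inv_mem hh, k⁻¹, inv_mem hk, ?_⟩
    simp only [rep, e]; group
  choose α hα s hs e using h1
  refine ⟨rep, α, hα, ?_, ?_⟩
  · intro g
    have : (rep g)⁻¹ * (α g)⁻¹ * g = s g := by
      rw [mul_assoc, inv_mul_eq_iff_eq_mul, inv_mul_eq_iff_eq_mul, ← mul_assoc]
      exact e g
    rw [this]; exact hs g
  · intro g h hh s hs
    simp only [rep]
    congr 1
    refine (DoubleCoset.eq _ _ _ _).2 ?_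
    exact ⟨h⁻¹, inv_mem hh, s⁻¹, inv_mem hs, by group⟩

end reps

section lifting

open Group

theorem exists_lift_fp {n : ℕ} {G : Type} [Group G] (φ : FreeGroup (Fin n) →* G)
    {κ : Type} (K : κ → Subgroup G) (hK : ∀ k, K k ≤ φ.range)
    (s : Finset κ) (hfp : ∀ k ∈ s, IsFinitelyPresented (K k)) :
    ∃ (Q : Type) (_ : Group Q) (_ : IsFinitelyPresented Q) (f : FreeGroup (Fin n) →* Q)
      (π : Q →* G), Function.Surjective f ∧ π.comp f = φ ∧
      ∀ k ∈ s, ∃ σ : K k →* Q, ∀ x, π (σ x) = x := by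
  classical
  induction s using Finset.induction_on with
  | empty => exact ⟨FreeGroup (Fin n), inferInstance, inferInstance, MonoidHom.id _, φ,
      Function.surjective_id, rfl, by simp⟩
  | insert k s hks ih =>
    obtain ⟨Q, _, _, f, π, hf, hπ, hσ⟩ := ih (fun k hk => hfp k (Finset.mem_insert_of_mem hk))
    have := hfp k (Finset.mem_insert_self _ _)
    obtain ⟨m, rels, hrels, ⟨e⟩⟩ := IsFinitelyPresented.exists_mulEquiv_presentedGroup (G := K k)
    -- lift of generators
    have hl : ∀ j : Fin m, ∃ q : Q, π q = (e.symm (PresentedGroup.of j) : G) := by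
      intro j
      obtain ⟨w, hw⟩ := hK k (e.symm (PresentedGroup.of j)).2
      exact ⟨f w, by rw [← hw, ← hπ]; rfl⟩
    choose q hq using hl
    let L := FreeGroup.lift q
    have hL : ∀ w, π (L w) = (e.symm (PresentedGroup.mk rels w) : G) := by
      intro w
      have : π.comp L = (K k).subtype.comp (e.symm.toMonoidHom.comp (PresentedGroup.mk rels)) := by
        ext j
        simp [L, hq]
        rfl
      exact DFunLike.congr_fun this w
    let N := Subgroup.normalClosure (L '' rels)
    have hN : N ≤ π.ker := by
      apply Subgroup.normalClosure_le_normal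
      rintro _ ⟨w, hw, rfl⟩
      change π (L w) = 1
      rw [hL, PresentedGroup.one_of_mem hw]
      simp
    let π' : Q ⧸ N →* G := QuotientGroup.lift N π hN
    have hfpQ : IsFinitelyPresented (Q ⧸ N) :=
      IsFinitelyPresented.quotient N ⟨_, hrels.image _, rfl⟩
    refine ⟨Q ⧸ N, inferInstance, hfpQ, (QuotientGroup.mk' N).comp f, π',
      (QuotientGroup.mk'_surjective N).comp hf, ?_, ?_⟩
    · rw [← hπ]; rfl
    · intro k' hk'
      rcases Finset.mem_insert.1 hk' with rfl | hk'
      · have hr : ∀ w ∈ rels, FreeGroup.lift (fun j => (QuotientGroup.mk' N) (q j)) w = 1 := by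
          intro w hw
          have h2 : FreeGroup.lift (fun j => (QuotientGroup.mk' N) (q j))
              = (QuotientGroup.mk' N).comp L := by
            ext j; simp [L]
          rw [h2]
          exact (QuotientGroup.eq_one_iff _).2 (Subgroup.subset_normalClosure ⟨w, hw, rfl⟩)
        let σ := PresentedGroup.toGroup hr
        refine ⟨σ.comp e.toMonoidHom, ?_⟩
        have : (π'.comp σ) = (K k').subtype.comp e.symm.toMonoidHom := by
          ext j
          simp only [MonoidHom.comp_apply, σ, PresentedGroup.toGroup.of]
          exact hq j
        intro x
        have := DFunLike.congr_fun this (e x)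
        simpa using this
      · obtain ⟨σ, hσ⟩ := hσ k' hk'
        exact ⟨(QuotientGroup.mk' N).comp σ, fun x => hσ x⟩

end lifting

section paths
open Relation
variable {ι G : Type*} [Group G]

/-- One step of a path of edges, with vertices in `J` and displacement in `S`. -/
def PStep (A : ι → Subgroup G) (J S : Set G) (y y' : G × G) : Prop :=
  y.2 ∈ J ∧ y'.2 ∈ J ∧ y.1⁻¹ * y'.1 ∈ S ∧ ∃ i, (y.1 * y.2)⁻¹ * (y'.1 * y'.2) ∈ A i

theorem PStep.mono {A : ι → Subgroup G} {J S J' S' : Set G} (hJ : J ⊆ J') (hS : S ⊆ S')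
    {y y' : G × G} (h : PStep A J S y y') : PStep A J' S' y y' :=
  ⟨hJ h.1, hJ h.2.1, hS h.2.2.1, h.2.2.2⟩

theorem rtg_mono {X : Type*} {r p : X → X → Prop} (h : ∀ a b, r a b → p a b) {a b : X}
    (hab : ReflTransGen r a b) : ReflTransGen p a b := by
  induction hab with
  | refl => exact .refl
  | tail _ h1 ih => exact .tail ih (h _ _ h1)

theorem exists_path [Nonempty ι] {A : ι → Subgroup G} {C : Subgroup G} (hA : IsAmalgam A C)
    (H : Subgroup G) (ρ γ : G → G) (hγ : ∀ g, γ g ∈ H)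
    (hρ : ∀ g, (ρ g)⁻¹ * (γ g)⁻¹ * g ∈ C)
    (hρ' : ∀ g, ∀ h ∈ H, ∀ s ∈ C, ρ (h * g * s) = ρ g)
    (c0 : G) (hc0 : ρ c0 = c0) (h : G) (hh : h ∈ H) :
    ∃ J S : Set G, J.Finite ∧ S.Finite ∧ (∀ c ∈ J, ρ c = c) ∧ S ⊆ H ∧
      ReflTransGen (PStep A J S) (1, c0) (h, c0) := by
  have hρρ : ∀ g, ρ (ρ g) = ρ g := by
    intro g
    have := hρ' g (γ g)⁻¹ (inv_mem (hγ g)) _ (inv_mem (hρ g))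
    refine Eq.trans ?_ this
    congr 1
    simp only [mul_inv_rev, inv_inv]
    group
  let Good : G → Prop := fun w => ∃ η ∈ H, ∃ c, ρ c = c ∧ (η * c)⁻¹ * w ∈ C ∧
    ∃ J S : Set G, J.Finite ∧ S.Finite ∧ (∀ c ∈ J, ρ c = c) ∧ S ⊆ H ∧
      ReflTransGen (PStep A J S) (1, c0) (η, c)
  have hstep : ∀ i, ∀ x ∈ A i, ∀ w, Good w → Good (w * x) := by
    rintro i x hx w ⟨η, hη, c, hc, hw, J, S, hJ, hS, hJc, hSH, hp⟩
    have hm := hρ (w * x)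
    refine ⟨γ (w * x), hγ _, ρ (w * x), hρρ _, by simpa [mul_assoc] using hm,
      J ∪ {c, ρ (w * x)}, S ∪ {η⁻¹ * γ (w * x)}, hJ.union (by simp), hS.union (by simp),
      ?_, ?_, ?_⟩
    · rintro d (hd | rfl | rfl)
      · exact hJc _ hd
      · exact hc
      · exact hρρ _
    · rintro d (hd | rfl)
      · exact hSH hd
      · exact mul_mem (inv_mem hη) (hγ _)
    · refine ReflTransGen.tail (rtg_mono
        (fun a b hab => PStep.mono Set.subset_union_left Set.subset_union_left hab) hp) ⟨by simp, by simp, by simp, i, ?_⟩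
      have h1 := mul_mem (mul_mem (hA.le i hw) hx) (inv_mem (hA.le i hm))
      convert h1 using 1
      simp only
      group
  have hall : ∀ x : G, ∀ w, Good w → Good (w * x) := by
    intro x
    have hx : x ∈ ⨆ i, A i := by rw [hA.gen]; trivial
    induction hx using Subgroup.iSup_induction' with
    | hp i x hx => exact hstep i x hx
    | h1 => simp
    | hmul x y _ _ h1 h2 =>
      intro w hw
      rw [← mul_assoc]
      exact h2 _ (h1 _ hw)
  have h0 : Good c0 := ⟨1, one_mem _, c0, hc0, by simp, ∅, ∅, by simp, by simp, by simp, by simp,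
    ReflTransGen.refl⟩
  have h1 := hall (c0⁻¹ * (h * c0)) c0 h0
  rw [mul_inv_cancel_left] at h1
  obtain ⟨η, hη, c, hc, hw, J, S, hJ, hS, hJc, hSH, hp⟩ := h1
  have hcc : c = c0 := by
    have := hρ' c (h⁻¹ * η) (mul_mem (inv_mem hh) hη) _ hw
    rw [← hc, ← this, ← hc0]
    congr 1
    rw [hc0]
    group
  subst hcc
  obtain ⟨i⟩ := ‹Nonempty ι›
  refine ⟨J ∪ {c}, S ∪ {η⁻¹ * h}, hJ.union (by simp), hS.union (by simp), ?_, ?_, ?_⟩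
  · rintro d (hd | rfl)
    · exact hJc _ hd
    · exact hc
  · rintro d (hd | rfl)
    · exact hSH hd
    · exact mul_mem (inv_mem hη) hh
  · refine ReflTransGen.tail (rtg_mono
        (fun a b hab => PStep.mono Set.subset_union_left Set.subset_union_left hab) hp) ⟨by simp, by simp, by simp, i, ?_⟩
    exact hA.le i hw

end paths

section cover
open Relation
variable {ι G Q : Type*} [Group G] [Group Q]

/-- The local adjacency relation on the edges `Q × J` of the covering tree. -/
def YR (J : Set G) (R α : ι → G → G) (K : ι → G → Subgroup G) (τ : ι → G → G → Q) (l : G → Q)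
    (i : ι) (y y' : Q × G) : Prop :=
  y.2 ∈ J ∧ y'.2 ∈ J ∧ ∃ a, R i y.2 = a ∧ R i y'.2 = a ∧ ∃ k ∈ K i a,
    y.1⁻¹ * y'.1 = l (α i y.2) * τ i a k * (l (α i y'.2))⁻¹

variable {J : Set G} {R α : ι → G → G} {K : ι → G → Subgroup G} {τ : ι → G → G → Q} {l : G → Q}

theorem YR.map {Q' : Type*} [Group Q'] (f : Q →* Q') {i : ι} {y y' : Q × G}
    (h : YR J R α K τ l i y y') :
    YR J R α K (fun i a x => f (τ i a x)) (fun x => f (l x)) i (f y.1, y.2) (f y'.1, y'.2) := by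
  obtain ⟨h1, h2, a, h3, h4, k, hk, h5⟩ := h
  exact ⟨h1, h2, a, h3, h4, k, hk, by simpa using congrArg f h5⟩

theorem YR.smul (q : Q) {i : ι} {y y' : Q × G}
    (h : YR J R α K τ l i y y') :
    YR J R α K τ l i (q * y.1, y.2) (q * y'.1, y'.2) := by
  obtain ⟨h1, h2, a, h3, h4, k, hk, h5⟩ := h
  exact ⟨h1, h2, a, h3, h4, k, hk, by rw [← h5]; simp only; group⟩

theorem YR.trans (hτ : ∀ i a, ∀ x ∈ K i a, ∀ y ∈ K i a, τ i a (x * y) = τ i a x * τ i a y)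
    {i : ι} {y y' y'' : Q × G}
    (h : YR J R α K τ l i y y') (h' : YR J R α K τ l i y' y'') : YR J R α K τ l i y y'' := by
  obtain ⟨h1, h2, a, h3, h4, k, hk, h5⟩ := h
  obtain ⟨h1', h2', a', h3', h4', k', hk', h5'⟩ := h'
  obtain rfl : a = a' := h4.symm.trans h3'
  refine ⟨h1, h2', a, h3, h4', k * k', mul_mem hk hk', ?_⟩
  have : y.1⁻¹ * y''.1 = (y.1⁻¹ * y'.1) * (y'.1⁻¹ * y''.1) := by group
  rw [this, h5, h5', hτ _ _ _ hk _ hk']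
  group

theorem tau_one (hτ : ∀ i a, ∀ x ∈ K i a, ∀ y ∈ K i a, τ i a (x * y) = τ i a x * τ i a y)
    (i : ι) (a : G) : τ i a 1 = 1 := by
  have := hτ i a 1 (one_mem _) 1 (one_mem _)
  simpa using this

theorem tau_inv (hτ : ∀ i a, ∀ x ∈ K i a, ∀ y ∈ K i a, τ i a (x * y) = τ i a x * τ i a y)
    (i : ι) (a x : G) (hx : x ∈ K i a) : τ i a x⁻¹ = (τ i a x)⁻¹ := by
  have := hτ i a x⁻¹ (inv_mem hx) x hx
  rw [inv_mul_cancel, tau_one hτ] at this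
  exact eq_inv_of_mul_eq_one_left this.symm

theorem YR.symm (hτ : ∀ i a, ∀ x ∈ K i a, ∀ y ∈ K i a, τ i a (x * y) = τ i a x * τ i a y)
    {i : ι} {y y' : Q × G}
    (h : YR J R α K τ l i y y') : YR J R α K τ l i y' y := by
  obtain ⟨h1, h2, a, h3, h4, k, hk, h5⟩ := h
  refine ⟨h2, h1, a, h4, h3, k⁻¹, inv_mem hk, ?_⟩
  have : y'.1⁻¹ * y.1 = (y.1⁻¹ * y'.1)⁻¹ := by group
  rw [this, h5, tau_inv hτ _ _ _ hk]
  group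

theorem YR.refl (hτ : ∀ i a, ∀ x ∈ K i a, ∀ y ∈ K i a, τ i a (x * y) = τ i a x * τ i a y)
    (i : ι) (y : Q × G) (hy : y.2 ∈ J) : YR J R α K τ l i y y :=
  ⟨hy, hy, _, rfl, rfl, 1, one_mem _, by rw [tau_one hτ]; group⟩

end cover


section endgame
open Relation
variable {ι G Q : Type*} [Group G] [Group Q] {A : ι → Subgroup G} {C H : Subgroup G}
variable {J : Set G} {R α : ι → G → G} {K : ι → G → Subgroup G} {τ : ι → G → G → Q} {l : G → Q}

theorem YR.rtg_symm (hτ : ∀ i a, ∀ x ∈ K i a, ∀ y ∈ K i a, τ i a (x * y) = τ i a x * τ i a y)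
    {y y' : Q × G} (h : ReflTransGen (fun a b => ∃ i, YR J R α K τ l i a b) y y') :
    ReflTransGen (fun a b => ∃ i, YR J R α K τ l i a b) y' y := by
  induction h with
  | refl => exact .refl
  | tail _ h1 ih =>
    obtain ⟨i, hi⟩ := h1
    exact .head ⟨i, hi.symm hτ⟩ ih

theorem YR.rtg_smul (q : Q)
    {y y' : Q × G} (h : ReflTransGen (fun a b => ∃ i, YR J R α K τ l i a b) y y') :
    ReflTransGen (fun a b => ∃ i, YR J R α K τ l i a b) (q * y.1, y.2) (q * y'.1, y'.2) := by
  induction h with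
  | refl => exact .refl
  | tail _ h1 ih =>
    obtain ⟨i, hi⟩ := h1
    exact .tail ih ⟨i, hi.smul q⟩

theorem YR.conn (hτ : ∀ i a, ∀ x ∈ K i a, ∀ y ∈ K i a, τ i a (x * y) = τ i a x * τ i a y)
    (c0 : G) {n : ℕ} (f : FreeGroup (Fin n) →* Q) (hf : Function.Surjective f)
    (hgen : ∀ m, ReflTransGen (fun a b => ∃ i, YR J R α K τ l i a b) (1, c0)
      (f (FreeGroup.of m), c0)) (q : Q) :
    ReflTransGen (fun a b => ∃ i, YR J R α K τ l i a b) (1, c0) (q, c0) := by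
  obtain ⟨w, rfl⟩ := hf q
  have hmul : ∀ q q' : Q, ReflTransGen (fun a b => ∃ i, YR J R α K τ l i a b) (1, c0) (q, c0) →
      ReflTransGen (fun a b => ∃ i, YR J R α K τ l i a b) (1, c0) (q', c0) →
      ReflTransGen (fun a b => ∃ i, YR J R α K τ l i a b) (1, c0) (q * q', c0) := by
    intro q q' h1 h2
    have := YR.rtg_smul q h2
    simp only [mul_one] at this
    exact h1.trans this
  have hinv : ∀ q : Q, ReflTransGen (fun a b => ∃ i, YR J R α K τ l i a b) (1, c0) (q, c0) →
      ReflTransGen (fun a b => ∃ i, YR J R α K τ l i a b) (1, c0) (q⁻¹, c0) := by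
    intro q h1
    have := YR.rtg_smul q⁻¹ (YR.rtg_symm hτ h1)
    simpa using this
  induction w using FreeGroup.induction_on with
  | C1 => rw [map_one]
  | of m => exact hgen m
  | inv_of m ih => rw [map_inv]; exact hinv _ ih
  | mul x y hx hy => rw [map_mul]; exact hmul _ _ hx hy

theorem endgame [Nonempty ι] (hA : IsAmalgam A C)
    (hτ : ∀ i a, ∀ x ∈ K i a, ∀ y ∈ K i a, τ i a (x * y) = τ i a x * τ i a y)
    (π : Q →* G)
    (hπτ : ∀ i a, ∀ x ∈ K i a, π (τ i a x) = x)
    (hl : ∀ h ∈ H, π (l h) = h)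
    (hα : ∀ i g, α i g ∈ H)
    (hR : ∀ i g, (R i g)⁻¹ * (α i g)⁻¹ * g ∈ A i)
    (hKH : ∀ i a, K i a ≤ H)
    (hKA : ∀ i a, ∀ k ∈ K i a, a⁻¹ * k * a ∈ A i)
    (ρ : G → G)
    (hρ' : ∀ g, ∀ h ∈ H, ∀ s ∈ C, ρ (h * g * s) = ρ g)
    (hJ : ∀ c ∈ J, ρ c = c) (c0 : G) (hc0 : c0 ∈ J)
    (hLI : ∀ c ∈ J, ∀ h ∈ H, c⁻¹ * h * c ∈ C → ∀ i j,
      (α i c)⁻¹ * h * α i c ∈ K i (R i c) ∧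
      l (α i c) * τ i (R i c) ((α i c)⁻¹ * h * α i c) * (l (α i c))⁻¹ =
      l (α j c) * τ j (R j c) ((α j c)⁻¹ * h * α j c) * (l (α j c))⁻¹)
    (hconn : ∀ q, ReflTransGen (fun a b => ∃ i, YR J R α K τ l i a b) (1, c0) (q, c0)) :
    Function.Injective π := by
  rw [injective_iff_map_eq_one]
  intro q hq
  have hpath := YR.rtg_symm hτ (hconn q)
  have key : ∀ i (y y' : Q × G), YR J R α K τ l i y y' → ∃ k ∈ K i (R i y.2),
      R i y.2 = R i y'.2 ∧
      y.1⁻¹ * y'.1 = l (α i y.2) * τ i (R i y.2) k * (l (α i y'.2))⁻¹ ∧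
      π y.1⁻¹ * π y'.1 = α i y.2 * k * (α i y'.2)⁻¹ := by
    rintro i y y' ⟨h1, h2, a, rfl, h4, k, hk, h5⟩
    refine ⟨k, hk, h4.symm, h5, ?_⟩
    rw [← map_mul, h5, map_mul, map_mul, hπτ _ _ _ hk, hl _ (hα _ _), map_inv, hl _ (hα _ _)]
  have hrel := core_rel (p := fun y : Q × G => π y.1 * y.2) (r := YR J R α K τ l) (y0 := (1, c0))
    hA ?_ (fun i y y' y'' h h' => h.trans hτ h') ?_ (fun i => YR.refl hτ i _ hc0) hpath ?_
  · obtain ⟨i⟩ := ‹Nonempty ι›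
    obtain ⟨k, hk, -, h1, h2⟩ := key i _ _ (hrel i)
    simp only [map_inv, hq, inv_one, map_one, mul_one] at h1 h2
    have hk1 : k = 1 := by
      have := h2.symm
      rwa [mul_inv_eq_one, mul_eq_left] at this
    rw [hk1, tau_one hτ, mul_one, mul_inv_cancel] at h1
    simpa using h1
  · intro i y y' h
    obtain ⟨k, hk, hRR, -, h2⟩ := key i _ _ h
    have h3 := mul_mem (mul_mem (inv_mem (hR i y.2)) (hKA _ _ _ hk)) (hR i y'.2)
    convert h3 using 1
    have h4 : (π y.1 * y.2)⁻¹ * (π y'.1 * y'.2) = y.2⁻¹ * (π y.1⁻¹ * π y'.1) * y'.2 := by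
      rw [map_inv]; group
    rw [h4, h2, ← hRR]
    group
  · intro i y y' h hC j
    obtain ⟨k, hk, hRR, h1, h2⟩ := key i _ _ h
    have h4 : (π y.1 * y.2)⁻¹ * (π y'.1 * y'.2) = y.2⁻¹ * (π y.1⁻¹ * π y'.1) * y'.2 := by
      rw [map_inv]; group
    have hC1 : y.2⁻¹ * (π y.1⁻¹ * π y'.1) * y'.2 ∈ C := by rw [← h4]; exact hC
    have hh : π y.1⁻¹ * π y'.1 ∈ H := by
      rw [h2]
      exact mul_mem (mul_mem (hα _ _) (hKH _ _ hk)) (inv_mem (hα _ _))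
    obtain ⟨hy, hy', -⟩ := h
    have hcc : y.2 = y'.2 := by
      have := hρ' y.2 _ (inv_mem hh) _ hC1
      rw [hJ _ hy] at this
      rw [← this, ← hJ _ hy']
      congr 1
      rw [hJ _ hy']
      group
    rw [← hcc] at hC1 h1 h2
    have hkk : k = (α i y.2)⁻¹ * (π y.1⁻¹ * π y'.1) * α i y.2 := by rw [h2]; group
    obtain ⟨h5, -⟩ := hLI _ hy _ hh hC1 j i
    obtain ⟨-, h6⟩ := hLI _ hy _ hh hC1 i j
    refine ⟨hy, hy', R j y.2, rfl, by rw [hcc], _, h5, ?_⟩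
    rw [← hcc, ← h6, ← hkk, h1]
  · simp [hq]

theorem LI_closure 
    (hτ : ∀ i a, ∀ x ∈ K i a, ∀ y ∈ K i a, τ i a (x * y) = τ i a x * τ i a y)
    (c : G) (T : Set G) 
    (hT : ∀ h ∈ T, ∀ i j,
      (α i c)⁻¹ * h * α i c ∈ K i (R i c) ∧
      l (α i c) * τ i (R i c) ((α i c)⁻¹ * h * α i c) * (l (α i c))⁻¹ =
      l (α j c) * τ j (R j c) ((α j c)⁻¹ * h * α j c) * (l (α j c))⁻¹) :
    ∀ h ∈ Subgroup.closure T, ∀ i j,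
      (α i c)⁻¹ * h * α i c ∈ K i (R i c) ∧
      l (α i c) * τ i (R i c) ((α i c)⁻¹ * h * α i c) * (l (α i c))⁻¹ =
      l (α j c) * τ j (R j c) ((α j c)⁻¹ * h * α j c) * (l (α j c))⁻¹ := by
  intro h hh
  induction hh using Subgroup.closure_induction with
  | mem x hx => exact hT x hx
  | one => 
    intro i j
    simp [tau_one hτ, one_mem]
  | mul x y _ _ hx hy =>
    intro i j
    have e : ∀ i, (α i c)⁻¹ * (x * y) * α i c = 
      ((α i c)⁻¹ * x * α i c) * ((α i c)⁻¹ * y * α i c) := by intro i; group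
    rw [e i, e j]
    refine ⟨mul_mem (hx i j).1 (hy i j).1, ?_⟩
    rw [hτ _ _ _ (hx i j).1 _ (hy i j).1, hτ _ _ _ (hx j i).1 _ (hy j i).1]
    have := congrArg₂ (· * ·) (hx i j).2 (hy i j).2
    convert this using 1 <;> group
  | inv x _ hx =>
    intro i j
    have e : ∀ i, (α i c)⁻¹ * x⁻¹ * α i c = ((α i c)⁻¹ * x * α i c)⁻¹ := by intro i; group
    rw [e i, e j]
    refine ⟨inv_mem (hx i j).1, ?_⟩
    rw [tau_inv hτ _ _ _ (hx i j).1, tau_inv hτ _ _ _ (hx j i).1]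
    have := congrArg (·⁻¹) (hx i j).2
    convert this using 1 <;> group

/-- Lifting a path. -/
theorem lift_path {S : Set G} (π : Q →* G)
    (hπτ : ∀ i a, ∀ x ∈ K i a, π (τ i a x) = x)
    (hl : ∀ h ∈ H, π (l h) = h)
    (hα : ∀ i g, α i g ∈ H) 
    (hR : ∀ i c c' s, c ∈ J → c' ∈ J → s ∈ S → c⁻¹ * s * c' ∈ A i → R i c = R i c')
    (hK : ∀ i c c' s, c ∈ J → c' ∈ J → s ∈ S → c⁻¹ * s * c' ∈ A i → 
      (α i c)⁻¹ * s * α i c' ∈ K i (R i c))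
    {c0 η c : G} (h : ReflTransGen (PStep A J S) (1, c0) (η, c)) :
    ∃ q, π q = η ∧ ReflTransGen (fun a b => ∃ i, YR J R α K τ l i a b) (1, c0) (q, c) := by
  have : ∀ y, ReflTransGen (PStep A J S) (1, c0) y → ∃ q, π q = y.1 ∧ 
      ReflTransGen (fun a b => ∃ i, YR J R α K τ l i a b) (1, c0) (q, y.2) := by
    intro y hy
    induction hy with
    | refl => exact ⟨1, by simp, .refl⟩
    | @tail y y' _ h1 ih =>
      obtain ⟨q, hq, hp⟩ := ih
      obtain ⟨h1, h2, h3, i, h4⟩ := h1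
      have h5 : y.2⁻¹ * (y.1⁻¹ * y'.1) * y'.2 ∈ A i := by
        convert h4 using 1; group
      have hk := hK i _ _ _ h1 h2 h3 h5
      refine ⟨q * (l (α i y.2) * τ i (R i y.2) ((α i y.2)⁻¹ * (y.1⁻¹ * y'.1) * α i y'.2) *
        (l (α i y'.2))⁻¹), ?_, .tail hp ⟨i, h1, h2, _, rfl, (hR _ _ _ _ h1 h2 h3 h5).symm,
          _, hk, by simp⟩⟩
      simp only [map_mul, map_inv, hπτ _ _ _ hk, hl _ (hα _ _), hq]
      group
  exact this _ h

end endgame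


section amalgamThm
open Relation Group

theorem fg_map' {G G' : Type*} [Group G] [Group G'] (f : G →* G') {P : Subgroup G} (h : P.FG) :
    (P.map f).FG := by
  rw [Subgroup.fg_iff_submonoid_fg] at h ⊢
  exact h.map f

theorem fg_of_map_injective {G G' : Type*} [Group G] [Group G'] (f : G →* G')
    (hf : Function.Injective f) {P : Subgroup G} (h : (P.map f).FG) : P.FG := by
  rw [Subgroup.fg_iff_submonoid_fg] at h ⊢
  exact Submonoid.FG.map_injective f hf h

theorem conj_inj {G : Type*} [Group G] (a : G) :
    Function.Injective (MulAut.conj a : G ≃* G).toMonoidHom := (MulAut.conj a).injective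

theorem fp_of_amalgam {ι G : Type} [Finite ι] [Nonempty ι] [Group G] {A : ι → Subgroup G}
    {C : Subgroup G} (hA : IsAmalgam A C)
    (hcoh : ∀ i, ∀ K : Subgroup G, K ≤ A i → K.FG → IsFinitelyPresented K)
    (hC : ∀ K : Subgroup G, K ≤ C → K.FG) (H : Subgroup G) (hH : H.FG) :
    IsFinitelyPresented H := by
  classical
  have := Fintype.ofFinite ι
  -- generators
  obtain ⟨X, hX⟩ := hH
  let n := X.card
  let x : Fin n → G := fun m => (X.equivFin.symm m : G)
  have hxr : Set.range x = (X : Set G) := by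
    ext g
    constructor
    · rintro ⟨m, rfl⟩; exact (X.equivFin.symm m).2
    · intro hg; exact ⟨X.equivFin ⟨g, hg⟩, by simp [x]⟩
  let φ : FreeGroup (Fin n) →* G := FreeGroup.lift x
  have hφ : φ.range = H := by
    simp only [φ, FreeGroup.range_lift_eq_closure, hxr, hX]
  have hxH : ∀ m, x m ∈ H := fun m => hφ ▸ ⟨FreeGroup.of m, by simp [φ]⟩
  obtain ⟨ρ, γ, hγ, hρ, hρ'⟩ := exists_rep H C
  have hrep := fun i => exists_rep H (A i)
  choose R α hα hR hR' using hrep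
  let c0 := ρ 1
  have hc0 : ρ c0 = c0 := by
    have := hρ' 1 (γ 1)⁻¹ (inv_mem (hγ 1)) _ (inv_mem (hρ 1))
    refine Eq.trans ?_ this
    congr 1
    simp only [mul_inv_rev, inv_inv, c0]
    group
  have hpaths := fun m => exists_path hA H ρ γ hγ hρ hρ' c0 hc0 (x m) (hxH m)
  choose Jm Sm hJm hSm hJmρ hSmH hpath using hpaths
  let J : Set G := {c0} ∪ ⋃ m, Jm m
  have hJfin : J.Finite := (Set.finite_singleton _).union (Set.finite_iUnion hJm)
  have hJρ : ∀ c ∈ J, ρ c = c := by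
    rintro c (rfl | hc)
    · exact hc0
    · obtain ⟨m, hm⟩ := Set.mem_iUnion.1 hc
      exact hJmρ m c hm
  let Hc : G → Subgroup G := fun c => H ⊓ C.comap (MulAut.conj c⁻¹ : G ≃* G).toMonoidHom
  have hHc : ∀ c, (Hc c).FG := by
    intro c
    apply fg_of_map_injective _ (conj_inj c⁻¹)
    apply hC
    rw [Subgroup.map_le_iff_le_comap]
    exact inf_le_right
  choose T hT using hHc
  have hTH : ∀ c, ∀ t ∈ T c, t ∈ H ∧ c⁻¹ * t * c ∈ C := by
    intro c t ht
    have : t ∈ Hc c := by rw [← hT]; exact Subgroup.subset_closure ht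
    have h2 : t ∈ C.comap (MulAut.conj c⁻¹ : G ≃* G).toMonoidHom := this.2
    simp only [SetLike.mem_coe, Subgroup.mem_comap, MulEquiv.coe_toMonoidHom,
      MulAut.conj_apply, inv_inv] at h2
    exact ⟨this.1, h2⟩
  let S : Set G := (⋃ m, Sm m) ∪ ⋃ c ∈ J, (T c : Set G)
  have hSfin : S.Finite := (Set.finite_iUnion hSm).union
    (hJfin.biUnion (fun c _ => (T c).finite_toSet))
  have hSH : ∀ s ∈ S, s ∈ H := by
    rintro s (hs | hs)
    · obtain ⟨m, hm⟩ := Set.mem_iUnion.1 hs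
      exact hSmH m hm
    · simp only [Set.mem_iUnion] at hs
      obtain ⟨c, hc, hs⟩ := hs
      exact (hTH c s hs).1
  have hpathJ : ∀ m, ReflTransGen (PStep A J S) (1, c0) (x m, c0) := fun m =>
    rtg_mono (fun a b hab => PStep.mono
      ((Set.subset_iUnion Jm m).trans Set.subset_union_right)
      ((Set.subset_iUnion Sm m).trans Set.subset_union_left) hab) (hpath m)
  -- the vertex groups
  let KG : ι → G → Set G := fun i a => {k | ∃ c ∈ J, ∃ c' ∈ J, ∃ s ∈ S, R i c = a ∧ R i c' = a ∧
    c⁻¹ * s * c' ∈ A i ∧ k = (α i c)⁻¹ * s * α i c'}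
  have hKGfin : ∀ i a, (KG i a).Finite := by
    intro i a
    refine ((hJfin.prod (hJfin.prod hSfin)).image
      (fun z : G × G × G => (α i z.1)⁻¹ * z.2.2 * α i z.2.1)).subset ?_
    rintro k ⟨c, hc, c', hc', s, hs, -, -, -, rfl⟩
    exact ⟨(c, c', s), ⟨hc, hc', hs⟩, rfl⟩
  let K : ι → G → Subgroup G := fun i a => Subgroup.closure (KG i a)
  have hKH : ∀ i a, K i a ≤ H := by
    intro i a
    rw [Subgroup.closure_le]
    rintro k ⟨c, hc, c', hc', s, hs, -, -, -, rfl⟩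
    exact mul_mem (mul_mem (inv_mem (hα _ _)) (hSH _ hs)) (hα _ _)
  have hKA' : ∀ i a, K i a ≤ (A i).comap (MulAut.conj a⁻¹ : G ≃* G).toMonoidHom := by
    intro i a
    rw [Subgroup.closure_le]
    rintro k ⟨c, hc, c', hc', s, hs, h1, h2, h3, rfl⟩
    simp only [SetLike.mem_coe, Subgroup.mem_comap, MulEquiv.coe_toMonoidHom,
      MulAut.conj_apply, inv_inv]
    have h4 := mul_mem (mul_mem (hR i c) h3) (inv_mem (hR i c'))
    rw [h1, h2] at h4
    convert h4 using 1
    group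
  have hKA : ∀ i a, ∀ k ∈ K i a, a⁻¹ * k * a ∈ A i := by
    intro i a k hk
    have := hKA' i a hk
    simpa only [SetLike.mem_coe, Subgroup.mem_comap, MulEquiv.coe_toMonoidHom,
      MulAut.conj_apply, inv_inv] using this
  have hKfg : ∀ i a, (K i a).FG := fun i a => (Subgroup.fg_iff _).2 ⟨_, rfl, hKGfin i a⟩
  have hKfp : ∀ i a, IsFinitelyPresented (K i a) := by
    intro i a
    have h1 := hcoh i ((K i a).map (MulAut.conj a⁻¹ : G ≃* G).toMonoidHom)
      (by rw [Subgroup.map_le_iff_le_comap]; exact hKA' i a) (fg_map' _ (hKfg i a))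
    exact IsFinitelyPresented.equiv (Subgroup.equivMapOfInjective _ _ (conj_inj a⁻¹)).symm
  have hRJ : ∀ i c c' s, c ∈ J → c' ∈ J → s ∈ S → c⁻¹ * s * c' ∈ A i → R i c = R i c' := by
    intro i c c' s hc hc' hs h
    have := hR' i c s⁻¹ (inv_mem (hSH _ hs)) _ h
    rw [← this]
    congr 1
    group
  have hKJ : ∀ i c c' s, c ∈ J → c' ∈ J → s ∈ S → c⁻¹ * s * c' ∈ A i →
      (α i c)⁻¹ * s * α i c' ∈ K i (R i c) := by
    intro i c c' s hc hc' hs h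
    exact Subgroup.subset_closure ⟨c, hc, c', hc', s, hs, rfl,
      (hRJ i c c' s hc hc' hs h).symm, h, rfl⟩
  -- the first approximation
  let I : Finset (ι × G) := Finset.univ.biUnion (fun i : ι =>
    hJfin.toFinset.image (fun c => (i, R i c)))
  obtain ⟨Q, _, hQ, f, π, hf, hπ, hσ⟩ := exists_lift_fp φ (fun z : ι × G => K z.1 z.2)
    (fun z => by rw [hφ]; exact hKH _ _) I (fun z _ => hKfp _ _)
  have hσ' : ∀ z : ι × G, ∃ σ : K z.1 z.2 →* Q, ∀ x, π (σ x) = x := by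
    intro z
    by_cases hz : z ∈ I
    · exact hσ z hz
    · have hbot : K z.1 z.2 = ⊥ := by
        rw [Subgroup.closure_eq_bot_iff]
        rintro k ⟨c, hc, c', hc', s, hs, h1, -⟩
        exfalso
        apply hz
        simp only [I, Finset.mem_biUnion, Finset.mem_image, Set.Finite.mem_toFinset]
        exact ⟨z.1, Finset.mem_univ _, c, hc, by rw [h1]⟩
      refine ⟨1, fun x => ?_⟩
      have hx : (x : G) = 1 := Subgroup.mem_bot.1 (hbot.le x.2)
      simp [hx]
  choose σ hσ using hσ'
  let τ : ι → G → G → Q := fun i a k => if hk : k ∈ K i a then σ (i, a) ⟨k, hk⟩ else 1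
  have hτv : ∀ i a k (hk : k ∈ K i a), τ i a k = σ (i, a) ⟨k, hk⟩ := by
    intro i a k hk
    simp only [τ, dif_pos hk]
  have hτ : ∀ i a, ∀ x ∈ K i a, ∀ y ∈ K i a, τ i a (x * y) = τ i a x * τ i a y := by
    intro i a x hx y hy
    rw [hτv _ _ _ hx, hτv _ _ _ hy, hτv _ _ _ (mul_mem hx hy), ← map_mul]
    rfl
  have hπτ : ∀ i a, ∀ x ∈ K i a, π (τ i a x) = x := by
    intro i a x hx
    rw [hτv _ _ _ hx, hσ]
  have hl : ∀ h : G, ∃ q : Q, h ∈ H → π q = h := by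
    intro h
    by_cases hh : h ∈ H
    · rw [← hφ] at hh
      obtain ⟨w, hw⟩ := hh
      exact ⟨f w, fun _ => by rw [← hw, ← hπ]; rfl⟩
    · exact ⟨1, fun h' => absurd h' hh⟩
  choose l hl using hl
  have hlp := fun m => lift_path (H := H) π hπτ hl hα hRJ hKJ (hpathJ m)
  choose qm hqm hqp using hlp
  let U : ι → G → G → Q := fun i c s =>
    l (α i c) * τ i (R i c) ((α i c)⁻¹ * s * α i c) * (l (α i c))⁻¹
  have hπU : ∀ i c s, c ∈ J → s ∈ S → c⁻¹ * s * c ∈ C → π (U i c s) = s := by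
    intro i c s hc hs h
    have hk := hKJ i c c s hc hc hs (hA.le i h)
    simp only [U, map_mul, map_inv, hπτ _ _ _ hk, hl _ (hα _ _)]
    group
  let Rel1 : Set Q := Set.range (fun m => (f (FreeGroup.of m))⁻¹ * qm m)
  let Rel2 : Set Q := {u | ∃ i j, ∃ c ∈ J, ∃ s ∈ S, c⁻¹ * s * c ∈ C ∧ u = U i c s * (U j c s)⁻¹}
  have hR2 : Rel2.Finite := by
    refine (((Set.finite_univ (α := ι)).prod ((Set.finite_univ (α := ι)).prod
      (hJfin.prod hSfin))).image
      (fun z : ι × ι × G × G => U z.1 z.2.2.1 z.2.2.2 * (U z.2.1 z.2.2.1 z.2.2.2)⁻¹)).subset ?_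
    rintro u ⟨i, j, c, hc, s, hs, -, rfl⟩
    exact ⟨(i, j, c, s), ⟨trivial, trivial, hc, hs⟩, rfl⟩
  let N := Subgroup.normalClosure (Rel1 ∪ Rel2)
  have hNker : N ≤ π.ker := by
    apply Subgroup.normalClosure_le_normal
    rintro u (⟨m, rfl⟩ | ⟨i, j, c, hc, s, hs, h, rfl⟩)
    · have h1 : π (f (FreeGroup.of m)) = x m := by
        have := DFunLike.congr_fun hπ (FreeGroup.of m)
        simpa [φ] using this
      simp [MonoidHom.mem_ker, hqm, h1]
    · simp [MonoidHom.mem_ker, hπU _ _ _ hc hs h]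
  have hQ2 : IsFinitelyPresented (Q ⧸ N) := IsFinitelyPresented.quotient N
    ⟨_, (Set.finite_range _).union hR2, rfl⟩
  let mk := QuotientGroup.mk' N
  let π2 : Q ⧸ N →* G := QuotientGroup.lift N π hNker
  have hπ2 : ∀ q, π2 (mk q) = π q := fun q => rfl
  have hτ2 : ∀ i a, ∀ x ∈ K i a, ∀ y ∈ K i a, mk (τ i a (x * y)) = mk (τ i a x) * mk (τ i a y) := by
    intro i a x hx y hy
    rw [hτ _ _ _ hx _ hy, map_mul]
  have hinj : Function.Injective π2 := by
    refine endgame (H := H) (J := J) (R := R) (α := α) (K := K) (τ := fun i a x => mk (τ i a x))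
      (l := fun x => mk (l x)) hA hτ2 π2 hπτ hl hα hR hKH hKA ρ hρ' hJρ c0 (Or.inl rfl) ?_ ?_
    · intro c hc h hh hhc
      have hmem : h ∈ Subgroup.closure (T c : Set G) := by
        rw [hT]
        refine ⟨hh, ?_⟩
        change h ∈ C.comap (MulAut.conj c⁻¹ : G ≃* G).toMonoidHom
        simpa only [SetLike.mem_coe, Subgroup.mem_comap, MulEquiv.coe_toMonoidHom,
          MulAut.conj_apply, inv_inv] using hhc
      refine LI_closure (K := K) (τ := fun i a x => mk (τ i a x))
        (l := fun x => mk (l x)) hτ2 c (T c) ?_ h hmem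
      intro t ht i j
      have htS : t ∈ S := Or.inr (Set.mem_biUnion hc ht)
      have htC := (hTH c t ht).2
      refine ⟨hKJ i c c t hc hc htS (hA.le i htC), ?_⟩
      have h1 : mk (U i c t * (U j c t)⁻¹) = 1 := (QuotientGroup.eq_one_iff _).2
        (Subgroup.subset_normalClosure (Or.inr ⟨i, j, c, hc, t, htS, htC, rfl⟩))
      rw [map_mul, map_inv, mul_inv_eq_one] at h1
      simpa only [U, map_mul, map_inv] using h1
    · refine YR.conn hτ2 c0 (mk.comp f) ((QuotientGroup.mk'_surjective N).comp hf) ?_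
      intro m
      have h1 : mk ((f (FreeGroup.of m))⁻¹ * qm m) = 1 := (QuotientGroup.eq_one_iff _).2
        (Subgroup.subset_normalClosure (Or.inl ⟨m, rfl⟩))
      rw [map_mul, map_inv, inv_mul_eq_one] at h1
      rw [MonoidHom.comp_apply, h1]
      have h2 : ∀ y y' : Q × G, ReflTransGen (fun a b => ∃ i, YR J R α K τ l i a b) y y' →
          ReflTransGen (fun a b => ∃ i, YR J R α K (fun i a x => mk (τ i a x))
            (fun x => mk (l x)) i a b) (mk y.1, y.2) (mk y'.1, y'.2) := by
        intro y y' h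
        induction h with
        | refl => exact .refl
        | tail _ h1 ih =>
          obtain ⟨i, hi⟩ := h1
          exact .tail ih ⟨i, hi.map mk⟩
      have h3 := h2 _ _ (hqp m)
      rwa [map_one] at h3
  have hrange : π2.range = H := by
    rw [← hφ]
    ext g
    constructor
    · rintro ⟨q, rfl⟩
      obtain ⟨q, rfl⟩ := QuotientGroup.mk'_surjective N q
      obtain ⟨w, rfl⟩ := hf q
      exact ⟨w, by rw [← hπ]; rfl⟩
    · rintro ⟨w, rfl⟩
      exact ⟨mk (f w), by rw [← hπ]; rfl⟩
  rw [← hrange]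
  exact IsFinitelyPresented.equiv (MonoidHom.ofInjective hinj)

end amalgamThm


section pushout
open Monoid Group

/-- Coherence, with Mathlib's notion of finite presentation. -/
def Coh (G : Type) [Group G] : Prop := ∀ H : Subgroup G, H.FG → IsFinitelyPresented H

variable {ι : Type} {Gi : ι → Type} [∀ i, Group (Gi i)] {H0 G : Type} [Group H0] [Group G]

theorem isAmalgam_of_pushout (φ : ∀ i, H0 →* Gi i) (hφ : ∀ i, Function.Injective (φ i))
    (θ : ∀ i, Gi i →* G) (θ0 : H0 →* G) (hθ : ∀ i, (θ i).comp (φ i) = θ0)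
    (Ψ : G →* PushoutI φ) (hΨ : ∀ i, Ψ.comp (θ i) = PushoutI.of i)
    (hgen : ⨆ i, (θ i).range = ⊤) :
    IsAmalgam (fun i => (θ i).range) θ0.range := by
  have hle : ∀ i, θ0.range ≤ (θ i).range := by
    rintro i _ ⟨x, rfl⟩
    exact ⟨φ i x, by rw [← hθ i]; rfl⟩
  refine ⟨hle, hgen, ?_⟩
  have hbase : ∀ _ : ι, ∀ c ∈ θ0.range, Ψ c ∈ (PushoutI.base φ).range := by
    rintro i _ ⟨x, rfl⟩
    refine ⟨x, ?_⟩
    rw [← hθ i, MonoidHom.comp_apply, ← MonoidHom.comp_apply, hΨ i, PushoutI.of_apply_eq_base]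
  have main : ∀ i0 : ι, ∀ o g, AmRed (fun i => (θ i).range) θ0.range o g →
      ∃ w : CoprodI.Word Gi, PushoutI.Reduced φ w ∧ w.fstIdx = o ∧
        ∃ b ∈ (PushoutI.base φ).range, Ψ g = PushoutI.ofCoprodI w.prod * b := by
    intro i0 o g h
    induction h with
    | base c hc =>
      refine ⟨CoprodI.Word.empty, ?_, rfl, Ψ c, hbase i0 c hc, by simp⟩
      intro g hg
      simp [CoprodI.Word.empty] at hg
    | step o g i a h ho ha hac ih =>
      obtain ⟨w, hw, hwo, b, hb, e⟩ := ih
      obtain ⟨x, rfl⟩ := ha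
      have hx : x ∉ (φ i).range := by
        rintro ⟨y, rfl⟩
        exact hac ⟨y, by rw [← hθ i]; rfl⟩
      have hx1 : x ≠ 1 := fun h => hx (h ▸ one_mem _)
      refine ⟨CoprodI.Word.cons x w (by rw [hwo]; exact ho) hx1, ?_, by simp, b, hb, ?_⟩
      · intro g hg
        simp only [CoprodI.Word.cons, List.mem_cons] at hg
        rcases hg with rfl | hg
        · exact hx
        · exact hw g hg
      · have h1 : Ψ (θ i x) = PushoutI.of i x := by rw [← hΨ i]; rfl
        rw [map_mul, h1, e, CoprodI.Word.prod_cons, map_mul, PushoutI.ofCoprodI_of, mul_assoc]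
  intro i g hg hC
  obtain ⟨w, hw, hwo, b, hb, e⟩ := main i _ _ hg
  have h1 : PushoutI.ofCoprodI w.prod ∈ (PushoutI.base φ).range := by
    have : PushoutI.ofCoprodI w.prod = Ψ g * b⁻¹ := by rw [e]; group
    rw [this]
    exact mul_mem (hbase i g hC) (inv_mem hb)
  have h2 := hw.eq_empty_of_mem_range hφ h1
  rw [h2] at hwo
  simp [CoprodI.Word.fstIdx, CoprodI.Word.empty] at hwo

theorem coh_map {G G' : Type} [Group G] [Group G'] (f : G →* G') (hf : Function.Injective f)
    (hG : Coh G) (K : Subgroup G') (hK : K ≤ f.range) (hfg : K.FG) : IsFinitelyPresented K := by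
  have e : (K.comap f).map f = K := by
    rw [Subgroup.map_comap_eq]; exact inf_eq_right.2 hK
  have h1 : IsFinitelyPresented (K.comap f) :=
    hG _ (fg_of_map_injective f hf (by rw [e]; exact hfg))
  rw [← e]
  exact IsFinitelyPresented.equiv (Subgroup.equivMapOfInjective _ f hf)

theorem coh_of_pushout [Finite ι] [Nonempty ι]
    (φ : ∀ i, H0 →* Gi i) (hφ : ∀ i, Function.Injective (φ i))
    (θ : ∀ i, Gi i →* G) (θ0 : H0 →* G) (hθ : ∀ i, (θ i).comp (φ i) = θ0)
    (Ψ : G →* PushoutI φ) (hΨ : ∀ i, Ψ.comp (θ i) = PushoutI.of i)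
    (hgen : ⨆ i, (θ i).range = ⊤) (hGi : ∀ i, Coh (Gi i)) (hH0 : ∀ K : Subgroup H0, K.FG) :
    Coh G := by
  intro H hH
  have hinj : ∀ i, Function.Injective (θ i) := by
    intro i
    have := PushoutI.of_injective hφ i
    rw [← hΨ i] at this
    exact Function.Injective.of_comp this
  refine fp_of_amalgam (isAmalgam_of_pushout φ hφ θ θ0 hθ Ψ hΨ hgen) ?_ ?_ H hH
  · intro i K hK hfg
    exact coh_map (θ i) (hinj i) (hGi i) K hK hfg
  · intro K hK
    have e : (K.comap θ0).map θ0 = K := by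
      rw [Subgroup.map_comap_eq]; exact inf_eq_right.2 hK
    rw [← e]
    exact fg_map' _ (hH0 _)

end pushout

section cox
open Group

variable {B : Type} (M : CoxeterMatrix B)

theorem cox_lift {G : Type*} [Group G] (f : B → G) (hf : ∀ i j, (f i * f j) ^ M i j = 1) :
    ∃ φ : M.Group →* G, ∀ i, φ (M.simple i) = f i :=
  ⟨M.toCoxeterSystem.lift ⟨f, hf⟩, fun i => M.toCoxeterSystem.lift_apply_simple hf i⟩

variable {M} in
theorem cox_ext {G : Type*} [Group G] {φ ψ : M.Group →* G}
    (h : ∀ i, φ (M.simple i) = ψ (M.simple i)) : φ = ψ :=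
  M.toCoxeterSystem.ext_simple h

theorem cox_sq (i : B) : M.simple i * M.simple i = 1 :=
  M.toCoxeterSystem.simple_mul_simple_self i

theorem cox_inv (i : B) : (M.simple i)⁻¹ = M.simple i :=
  M.toCoxeterSystem.inv_simple i

theorem cox_rel (i j : B) : (M.simple i * M.simple j) ^ M i j = 1 :=
  M.toCoxeterSystem.simple_mul_simple_pow i j

theorem cox_ne_one (i : B) : M.simple i ≠ 1 := by
  intro h
  have h1 := M.toCoxeterSystem.lengthParity_simple i
  have h2 : M.toCoxeterSystem.lengthParity (M.simple i) = 1 := by rw [h, map_one]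
  have h3 := h1.symm.trans h2
  revert h3
  decide

/-- Pullback of a Coxeter matrix along an injective map. -/
def CoxeterMatrix.pull {B B' : Type} (M : CoxeterMatrix B) (e : B' → B)
    (he : Function.Injective e) : CoxeterMatrix B' where
  M a b := M (e a) (e b)
  isSymm := Matrix.IsSymm.ext fun a b => M.isSymm.apply (e a) (e b)
  diagonal a := M.diagonal (e a)
  off_diagonal a b h := M.off_diagonal (e a) (e b) (fun hc => h (he hc))

theorem pull_apply {B B' : Type} (M : CoxeterMatrix B) (e : B' → B)
    (he : Function.Injective e) (a b : B') : M.pull e he a b = M (e a) (e b) := rfl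

theorem cox_map {B B' : Type} (M : CoxeterMatrix B) (M' : CoxeterMatrix B') (e : B' → B)
    (h : ∀ a b, M' a b = M (e a) (e b)) :
    ∃ φ : M'.Group →* M.Group, ∀ i, φ (M'.simple i) = M.simple (e i) :=
  cox_lift M' _ (fun i j => by rw [h]; exact cox_rel M _ _)

end cox

section coxAmalgam
open Group Monoid

/-- Splitting a Coxeter group as an amalgam of special subgroups. -/
theorem cox_split {ι B B0 : Type} [Nonempty ι] {B' : ι → Type} (M : CoxeterMatrix B)
    (e : ∀ i, B' i → B) (he : ∀ i, Function.Injective (e i))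
    (j : ∀ i, B0 → B' i) (e0 : B0 → B) (he0 : Function.Injective e0)
    (hj : ∀ i b, e i (j i b) = e0 b)
    (hcov : ∀ b, ∃ i a, e i a = b)
    (hcap : ∀ i i' a a', i ≠ i' → e i a = e i' a' → ∃ c, e0 c = e i a)
    (hM : ∀ b b', M b b' ≠ 0 → ∃ i a a', e i a = b ∧ e i a' = b')
    (φ : ∀ i, (M.pull e0 he0).Group →* (M.pull (e i) (he i)).Group)
    (hφ : ∀ i b, φ i ((M.pull e0 he0).simple b) = (M.pull (e i) (he i)).simple (j i b)) :
    ∃ (θ : ∀ i, (M.pull (e i) (he i)).Group →* M.Group) (θ0 : (M.pull e0 he0).Group →* M.Group)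
      (Ψ : M.Group →* PushoutI φ),
      (∀ i a, θ i ((M.pull (e i) (he i)).simple a) = M.simple (e i a)) ∧
      (∀ a, θ0 ((M.pull e0 he0).simple a) = M.simple (e0 a)) ∧
      (∀ i, (θ i).comp (φ i) = θ0) ∧ (∀ i, Ψ.comp (θ i) = PushoutI.of (G := fun i => (M.pull (e i) (he i)).Group) (φ := φ) i) ∧
      ⨆ i, (θ i).range = ⊤ := by
  have h1 := fun i => cox_map M (M.pull (e i) (he i)) (e i) (fun _ _ => rfl)
  choose θ hθ using h1
  obtain ⟨θ0, hθ0⟩ := cox_map M (M.pull e0 he0) e0 (fun _ _ => rfl)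
  choose idx pre hpre using hcov
  let F : B → PushoutI φ := fun b =>
    PushoutI.of (G := fun i => (M.pull (e i) (he i)).Group) (φ := φ) (idx b) ((M.pull (e (idx b)) (he (idx b))).simple (pre b))
  have hF' : ∀ i i' a a', e i a = e i' a' → (PushoutI.of (G := fun i => (M.pull (e i) (he i)).Group) (φ := φ) i
      ((M.pull (e i) (he i)).simple a) : PushoutI φ) =
      PushoutI.of (G := fun i => (M.pull (e i) (he i)).Group) (φ := φ) i' ((M.pull (e i') (he i')).simple a') := by
    intro i i' a a' h
    by_cases hi : i = i'
    · subst hi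
      rw [he i h]
    · obtain ⟨c, hc⟩ := hcap i i' a a' hi h
      have ha : a = j i c := he i (by rw [hj, hc])
      have ha' : a' = j i' c := he i' (by rw [hj, hc, h])
      rw [ha, ha', ← hφ, ← hφ, PushoutI.of_apply_eq_base, PushoutI.of_apply_eq_base]
  have hF : ∀ i a, F (e i a) = PushoutI.of (G := fun i => (M.pull (e i) (he i)).Group) (φ := φ) i ((M.pull (e i) (he i)).simple a) := by
    intro i a
    exact hF' _ _ _ _ (hpre _)
  obtain ⟨Ψ, hΨ⟩ := cox_lift M F (by
    intro b b'
    by_cases h0 : M b b' = 0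
    · rw [h0, pow_zero]
    · obtain ⟨i, a, a', rfl, rfl⟩ := hM b b' h0
      rw [hF, hF, ← map_mul, ← map_pow, ← pull_apply M (e i) (he i), cox_rel, map_one])
  refine ⟨θ, θ0, Ψ, hθ, hθ0, ?_, ?_, ?_⟩
  · intro i
    apply cox_ext
    intro b
    rw [MonoidHom.comp_apply, hφ, hθ, hθ0, hj]
  · intro i
    apply cox_ext
    intro a
    rw [MonoidHom.comp_apply, hθ, hΨ, hF]
  · rw [eq_top_iff, ← M.toCoxeterSystem.subgroup_closure_range_simple, Subgroup.closure_le]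
    rintro _ ⟨b, rfl⟩
    refine Subgroup.mem_iSup_of_mem (idx b) ⟨_, (hθ (idx b) (pre b)).trans ?_⟩
    rw [hpre]; rfl

end coxAmalgam


section small
open Group

theorem coh_of_finite (G : Type) [Group G] [Finite G] : Coh G := fun _ _ => inferInstance

theorem rank_one_elems (M : CoxeterMatrix (Fin 1)) (g : M.Group) : g = 1 ∨ g = M.simple 0 := by
  induction g using M.toCoxeterSystem.simple_induction_left with
  | one => exact Or.inl rfl
  | mul_simple_left w i ih =>
    have hi : i = 0 := Subsingleton.elim _ _
    subst hi
    rcases ih with rfl | rfl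
    · right; rw [mul_one]; rfl
    · left; exact cox_sq M 0

theorem rank_one_finite (M : CoxeterMatrix (Fin 1)) : Finite M.Group := by
  refine Set.finite_univ_iff.1 ((Set.toFinite {1, M.simple 0}).subset ?_)
  intro g _
  simpa using rank_one_elems M g

theorem rank_one_inj {B : Type} (M : CoxeterMatrix (Fin 1)) (M' : CoxeterMatrix B)
    (φ : M.Group →* M'.Group) (b : B) (h : φ (M.simple 0) = M'.simple b) :
    Function.Injective φ := by
  rw [injective_iff_map_eq_one]
  intro g hg
  rcases rank_one_elems M g with rfl | rfl
  · rfl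
  · rw [h] at hg
    exact absurd hg (cox_ne_one M' b)

theorem rank_two_elems (M : CoxeterMatrix (Fin 2)) (g : M.Group) :
    g ∈ Subgroup.zpowers (M.simple 0 * M.simple 1) ∨
    g * M.simple 0 ∈ Subgroup.zpowers (M.simple 0 * M.simple 1) := by
  set r := M.simple 0 * M.simple 1 with hr
  have hs0 := cox_sq M 0
  have hs1 := cox_sq M 1
  have hconj : ∀ x ∈ Subgroup.zpowers r, M.simple 0 * x * M.simple 0 ∈ Subgroup.zpowers r := by
    rintro x ⟨k, rfl⟩
    refine ⟨-k, ?_⟩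
    have h1 : M.simple 0 * r * (M.simple 0)⁻¹ = r⁻¹ := by
      rw [hr, mul_inv_rev, cox_inv, cox_inv, ← mul_assoc, hs0, one_mul]
    have h2 : M.simple 0 * r ^ k * M.simple 0 = (M.simple 0 * r * (M.simple 0)⁻¹) ^ k := by
      rw [conj_zpow, cox_inv]
    simp only [h2, h1, inv_zpow, zpow_neg]
  have hP0 : ∀ w, (w ∈ Subgroup.zpowers r ∨ w * M.simple 0 ∈ Subgroup.zpowers r) →
      (M.simple 0 * w ∈ Subgroup.zpowers r ∨ M.simple 0 * w * M.simple 0 ∈ Subgroup.zpowers r) := by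
    rintro w (h | h)
    · exact Or.inr (hconj w h)
    · left
      have := hconj _ h
      rwa [mul_assoc, mul_assoc, hs0, mul_one] at this
  induction g using M.toCoxeterSystem.simple_induction_left with
  | one => exact Or.inl (one_mem _)
  | mul_simple_left w i ih =>
    have hi : i = 0 ∨ i = 1 := by fin_cases i <;> simp
    rcases hi with rfl | rfl
    · exact hP0 w ih
    · have h1 : M.simple 1 * w = M.simple 0 * (r * w) := by
        rw [hr, ← mul_assoc, ← mul_assoc, hs0, one_mul]
      change M.simple 1 * w ∈ _ ∨ M.simple 1 * w * M.simple 0 ∈ _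
      rw [h1]
      apply hP0
      have hrm : r ∈ Subgroup.zpowers r := Subgroup.mem_zpowers r
      rcases ih with h | h
      · exact Or.inl (mul_mem hrm h)
      · right
        rw [mul_assoc]
        exact mul_mem hrm h

theorem rank_two_finite (M : CoxeterMatrix (Fin 2)) (h : M 0 1 ≠ 0) : Finite M.Group := by
  have hfo : IsOfFinOrder (M.simple 0 * M.simple 1) :=
    isOfFinOrder_iff_pow_eq_one.2 ⟨_, Nat.pos_of_ne_zero h, cox_rel M 0 1⟩
  have hfin : (Subgroup.zpowers (M.simple 0 * M.simple 1) : Set M.Group).Finite :=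
    finite_zpowers.2 hfo
  refine Set.finite_univ_iff.1 ((hfin.union (hfin.image (fun x => x * M.simple 0))).subset ?_)
  intro g _
  rcases rank_two_elems M g with h | h
  · exact Or.inl h
  · exact Or.inr ⟨_, h, by simp only; rw [mul_assoc, cox_sq, mul_one]⟩

theorem fg_of_le_zpowers {G : Type} [Group G] (r : G) (H : Subgroup G)
    (h : H ≤ Subgroup.zpowers r) : H.FG := by
  have e : (H.comap (zpowersHom G r)).map (zpowersHom G r) = H := by
    rw [Subgroup.map_comap_eq]
    refine inf_eq_right.2 (h.trans ?_)
    rintro x ⟨k, rfl⟩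
    exact ⟨Multiplicative.ofAdd k, by simp⟩
  rw [← e]
  apply fg_map'
  obtain ⟨k, hk⟩ := (Subgroup.isCyclic_iff_exists_zpowers_eq_top
    (H.comap (zpowersHom G r))).1 inferInstance
  exact (Subgroup.fg_iff _).2 ⟨{k}, by rw [← Subgroup.zpowers_eq_closure, hk], by simp⟩

theorem rank_two_slender (M : CoxeterMatrix (Fin 2)) (H : Subgroup M.Group) : H.FG := by
  set Z := Subgroup.zpowers (M.simple 0 * M.simple 1) with hZ
  by_cases hH : H ≤ Z
  · exact fg_of_le_zpowers _ H hH
  · obtain ⟨h, hh, hhZ⟩ := SetLike.not_le_iff_exists.1 hH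
    have e : H = (H ⊓ Z) ⊔ Subgroup.zpowers h := by
      apply le_antisymm
      · intro g hg
        rcases rank_two_elems M g with h1 | h1
        · exact (le_sup_left : H ⊓ Z ≤ _) ⟨hg, h1⟩
        · have h2 := (rank_two_elems M h).resolve_left hhZ
          have h3 : g * h⁻¹ ∈ H ⊓ Z := by
            refine Subgroup.mem_inf.2 ⟨mul_mem hg (inv_mem hh), ?_⟩
            have h5 := mul_mem h1 (inv_mem h2)
            have h6 : g * M.simple 0 * (h * M.simple 0)⁻¹ = g * h⁻¹ := by group
            rw [h6] at h5
            exact h5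
          have h4 : g = (g * h⁻¹) * h := by group
          rw [h4]
          exact mul_mem ((le_sup_left : H ⊓ Z ≤ _) h3)
            ((le_sup_right : Subgroup.zpowers h ≤ _) (Subgroup.mem_zpowers h))
      · exact sup_le inf_le_left (by rwa [Subgroup.zpowers_le])
    rw [e]
    refine (fg_of_le_zpowers _ _ inf_le_right).sup (fg_of_le_zpowers h _ le_rfl)

/-- Reduced alternating words. -/
inductive DRed (M : CoxeterMatrix (Fin 2)) : Option (Fin 2) → M.Group → Prop
  | nil : DRed M none 1
  | step (o : Option (Fin 2)) (g : M.Group) (i : Fin 2) (h : DRed M o g) (ho : o ≠ some i) :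
      DRed M (some i) (M.simple i * g)

theorem exists_dred (M : CoxeterMatrix (Fin 2)) (g : M.Group) : ∃ o, DRed M o g := by
  induction g using M.toCoxeterSystem.simple_induction_left with
  | one => exact ⟨none, .nil⟩
  | mul_simple_left w i ih =>
    obtain ⟨o, h⟩ := ih
    by_cases ho : o = some i
    · subst ho
      cases h with
      | step o g _ h ho =>
        refine ⟨o, ?_⟩
        have : M.toCoxeterSystem.simple i * (M.simple i * g) = g := by
          rw [← mul_assoc]
          exact (congrArg (· * g) (cox_sq M i)).trans (one_mul g)
        rw [this]
        exact h
    · exact ⟨_, .step o w i h ho⟩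

theorem dinf_inj {G : Type} [Group G] {A : Bool → Subgroup G} {C : Subgroup G}
    (hA : IsAmalgam A C) (M : CoxeterMatrix (Fin 2)) (f : M.Group →* G) (x : Fin 2 → Bool)
    (hx : Function.Injective x) (h : ∀ k, f (M.simple k) ∈ A (x k))
    (h' : ∀ k, f (M.simple k) ∉ C) : Function.Injective f := by
  rw [injective_iff_map_eq_one]
  intro g hg
  have key : ∀ o g, DRed M o g → AmRed A C (o.map x) (f g) := by
    intro o g hd
    induction hd with
    | nil => rw [map_one]; exact .base _ (one_mem _)
    | step o g i hd ho ih =>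
      rw [map_mul]
      refine .step _ _ _ _ ih ?_ (h i) (h' i)
      intro hc
      cases o with
      | none => simp at hc
      | some k =>
        simp only [Option.map_some, Option.some.injEq] at hc
        exact ho (by rw [hx hc])
  obtain ⟨o, ho⟩ := exists_dred M g
  have h1 := key o g ho
  cases o with
  | none => cases ho; rfl
  | some i =>
    exfalso
    rw [hg] at h1
    exact hA.red _ _ h1 (one_mem _)

theorem end_ne {B : Type} (M : CoxeterMatrix B) (v u : B) (huv : v ≠ u)
    (h : ∀ w, w ≠ v → w ≠ u → M v w = 0) (w : B) (hw : w ≠ v) : M.simple v ≠ M.simple w := by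
  classical
  let F : B → DihedralGroup (M v u) := fun b => if b = v then .sr 0 else .sr 1
  have hm : M v u ≠ 1 := M.off_diagonal v u huv
  obtain ⟨φ, hφ⟩ := cox_lift M F (by
    intro b b'
    by_cases hb : b = v <;> by_cases hb' : b' = v
    · simp [F, hb, hb']
    · by_cases hu : b' = u
      · subst hu
        subst hb
        simp only [F, if_true, if_neg hb']
        simp
      · rw [hb, h b' hb' hu, pow_zero]
    · by_cases hu : b = u
      · subst hu
        subst hb'
        simp only [F, if_true, if_neg hb]
        rw [M.symmetric b b']
        simp
      · have h0 : M b b' = 0 := by rw [hb', M.symmetric, h b hb hu]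
        rw [h0, pow_zero]
    · simp [F, hb, hb'])
  intro hc
  have h1 := congrArg φ hc
  rw [hφ, hφ] at h1
  simp only [F, if_true, if_neg hw] at h1
  rw [DihedralGroup.sr.injEq] at h1
  have h2 : ((1 : ℕ) : ZMod (M v u)) = 0 := by simpa using h1.symm
  rw [ZMod.natCast_eq_zero_iff] at h2
  exact hm (Nat.dvd_one.1 h2)

end small


section coxcoh
open Group Monoid

theorem cox_coh {ι B B0 : Type} [Nonempty ι] [Finite ι] {B' : ι → Type} (M : CoxeterMatrix B)
    (e : ∀ i, B' i → B) (he : ∀ i, Function.Injective (e i))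
    (j : ∀ i, B0 → B' i) (e0 : B0 → B) (he0 : Function.Injective e0)
    (hj : ∀ i b, e i (j i b) = e0 b)
    (hcov : ∀ b, ∃ i a, e i a = b)
    (hcap : ∀ i i' a a', i ≠ i' → e i a = e i' a' → ∃ c, e0 c = e i a)
    (hM : ∀ b b', M b b' ≠ 0 → ∃ i a a', e i a = b ∧ e i a' = b')
    (hinj : ∀ i, ∀ φ : (M.pull e0 he0).Group →* (M.pull (e i) (he i)).Group,
      (∀ b, φ ((M.pull e0 he0).simple b) = (M.pull (e i) (he i)).simple (j i b)) →
      Function.Injective φ)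
    (hcoh : ∀ i, Coh (M.pull (e i) (he i)).Group)
    (hsl : ∀ K : Subgroup (M.pull e0 he0).Group, K.FG) : Coh M.Group := by
  have h1 := fun i => cox_map (M.pull (e i) (he i)) (M.pull e0 he0) (j i)
    (fun a b => by simp only [pull_apply, hj])
  choose φ hφ using h1
  obtain ⟨θ, θ0, Ψ, -, -, h3, h4, h5⟩ :=
    cox_split M e he j e0 he0 hj hcov hcap hM φ hφ
  exact coh_of_pushout φ (fun i => hinj i _ (hφ i)) θ θ0 h3 Ψ h4 h5 hcoh hsl

theorem cox_isAmalgam {ι B B0 : Type} [Nonempty ι] {B' : ι → Type} (M : CoxeterMatrix B)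
    (e : ∀ i, B' i → B) (he : ∀ i, Function.Injective (e i))
    (j : ∀ i, B0 → B' i) (e0 : B0 → B) (he0 : Function.Injective e0)
    (hj : ∀ i b, e i (j i b) = e0 b)
    (hcov : ∀ b, ∃ i a, e i a = b)
    (hcap : ∀ i i' a a', i ≠ i' → e i a = e i' a' → ∃ c, e0 c = e i a)
    (hM : ∀ b b', M b b' ≠ 0 → ∃ i a a', e i a = b ∧ e i a' = b')
    (hinj : ∀ i, ∀ φ : (M.pull e0 he0).Group →* (M.pull (e i) (he i)).Group,
      (∀ b, φ ((M.pull e0 he0).simple b) = (M.pull (e i) (he i)).simple (j i b)) →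
      Function.Injective φ) :
    ∃ (A : ι → Subgroup M.Group) (θ0 : (M.pull e0 he0).Group →* M.Group),
      IsAmalgam A θ0.range ∧ (∀ i a, M.simple (e i a) ∈ A i) ∧
      (∀ a, θ0 ((M.pull e0 he0).simple a) = M.simple (e0 a)) := by
  have h1 := fun i => cox_map (M.pull (e i) (he i)) (M.pull e0 he0) (j i)
    (fun a b => by simp only [pull_apply, hj])
  choose φ hφ using h1
  obtain ⟨θ, θ0, Ψ, h1, h2, h3, h4, h5⟩ :=
    cox_split M e he j e0 he0 hj hcov hcap hM φ hφ
  exact ⟨_, θ0, isAmalgam_of_pushout φ (fun i => hinj i _ (hφ i)) θ θ0 h3 Ψ h4 h5,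
    fun i a => ⟨_, h1 i a⟩, h2⟩

end coxcoh

section path

/-- The Coxeter matrix of a path. -/
def IsPathM {n : ℕ} (N : CoxeterMatrix (Fin n)) : Prop :=
  (∀ i j : Fin n, (i : ℕ) + 1 = j → N i j ≠ 0) ∧ (∀ i j : Fin n, (i : ℕ) + 1 < j → N i j = 0)

theorem IsPathM.near {n : ℕ} {N : CoxeterMatrix (Fin n)} (h : IsPathM N) {i j : Fin n}
    (hij : N i j ≠ 0) : (i : ℕ) ≤ j + 1 ∧ (j : ℕ) ≤ i + 1 := by
  constructor
  · by_contra hc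
    exact hij (by rw [N.symmetric]; exact h.2 _ _ (by omega))
  · by_contra hc
    exact hij (h.2 _ _ (by omega))

/-- Sizes of the two pieces of a path. -/
def pk (n : ℕ) : Bool → ℕ
  | true => n + 1
  | false => 2

/-- Embeddings of the two pieces of a path. -/
def pe (n : ℕ) : ∀ b : Bool, Fin (pk n b) → Fin (n + 2)
  | true => fun k => ⟨k.1, by have := k.2; simp only [pk] at this; omega⟩
  | false => fun k => ⟨n + k.1, by have := k.2; simp only [pk] at this; omega⟩

/-- Embeddings of the common vertex. -/
def pj (n : ℕ) : ∀ b : Bool, Fin 1 → Fin (pk n b)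
  | true => fun _ => ⟨n, by simp [pk]⟩
  | false => fun _ => ⟨0, by simp [pk]⟩

/-- The common vertex. -/
def pe0 (n : ℕ) : Fin 1 → Fin (n + 2) := fun _ => ⟨n, by omega⟩

theorem pe_inj (n : ℕ) (b : Bool) : Function.Injective (pe n b) := by
  intro x y h
  cases b <;> simp only [pe, Fin.mk.injEq] at h <;> apply Fin.ext <;> omega

theorem pe0_inj (n : ℕ) : Function.Injective (pe0 n) := fun _ _ _ => Subsingleton.elim _ _

theorem pj_spec (n : ℕ) (i : Bool) (b : Fin 1) : pe n i (pj n i b) = pe0 n b := by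
  cases i <;> simp [pe, pj, pe0]

theorem p_cov (n : ℕ) (b : Fin (n + 2)) : ∃ i a, pe n i a = b := by
  by_cases h : b.1 ≤ n
  · exact ⟨true, ⟨b.1, by simp only [pk]; omega⟩, rfl⟩
  · exact ⟨false, ⟨1, by simp [pk]⟩, by apply Fin.ext; simp only [pe]; omega⟩

theorem p_int (n : ℕ) (i i' : Bool) (a : Fin (pk n i)) (a' : Fin (pk n i')) (hi : i ≠ i')
    (h : pe n i a = pe n i' a') : ∃ c, pe0 n c = pe n i a := by
  have ha := a.2
  have ha' := a'.2
  refine ⟨0, Fin.ext ?_⟩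
  have h1 := congrArg Fin.val h
  cases i <;> cases i' <;> simp only [pe, pk, pe0, ne_eq, not_true] at * <;> omega

theorem p_M {n : ℕ} (N : CoxeterMatrix (Fin (n + 2))) (hN : IsPathM N) (b b' : Fin (n + 2))
    (h : N b b' ≠ 0) : ∃ i a a', pe n i a = b ∧ pe n i a' = b' := by
  have h1 := hN.near h
  by_cases hb : b.1 ≤ n ∧ b'.1 ≤ n
  · exact ⟨true, ⟨b.1, by simp only [pk]; omega⟩, ⟨b'.1, by simp only [pk]; omega⟩, rfl, rfl⟩
  · exact ⟨false, ⟨b.1 - n, by simp only [pk]; omega⟩, ⟨b'.1 - n, by simp only [pk]; omega⟩,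
      by apply Fin.ext; simp only [pe]; omega, by apply Fin.ext; simp only [pe]; omega⟩

theorem coh_path (n : ℕ) (N : CoxeterMatrix (Fin (n + 1))) (hN : IsPathM N) : Coh N.Group := by
  induction n with
  | zero =>
    have := rank_one_finite N
    exact coh_of_finite _
  | succ n ih =>
    refine cox_coh N (pe n) (pe_inj n) (pj n) (pe0 n) (pe0_inj n) (pj_spec n) (p_cov n) (p_int n)
      (p_M N hN) ?_ ?_ ?_
    · intro i φ hφ
      exact rank_one_inj _ _ φ _ (hφ 0)
    · intro i
      cases i with
      | true =>
        apply ih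
        constructor
        · intro i j hij
          exact hN.1 _ _ hij
        · intro i j hij
          exact hN.2 _ _ hij
      | false =>
        have : Finite (N.pull (pe n false) (pe_inj n false)).Group := by
          refine rank_two_finite (N.pull (pe n false) (pe_inj n false)) ?_
          exact hN.1 _ _ rfl
        exact coh_of_finite _
    · intro K
      have := rank_one_finite (N.pull (pe0 n) (pe0_inj n))
      rw [← Group.fg_iff_subgroup_fg]
      infer_instance

theorem path_ends_inj (n : ℕ) (N : CoxeterMatrix (Fin (n + 3))) (hN : IsPathM N)
    (M : CoxeterMatrix (Fin 2)) (f : M.Group →* N.Group) (v : Fin 2 → Fin (n + 3))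
    (hv : Function.Injective v) (hv' : ∀ k, (v k : ℕ) = 0 ∨ (v k : ℕ) = n + 2)
    (hf : ∀ k, f (M.simple k) = N.simple (v k)) : Function.Injective f := by
  obtain ⟨A, θ0, hA, h1, h2⟩ := cox_isAmalgam N (pe (n + 1)) (pe_inj (n + 1)) (pj (n + 1))
    (pe0 (n + 1)) (pe0_inj (n + 1)) (pj_spec (n + 1)) (p_cov (n + 1)) (p_int (n + 1))
    (p_M N hN) (fun i φ hφ => rank_one_inj _ _ φ _ (hφ 0))
  have hne : ∀ k, ∀ w, w ≠ v k → N.simple (v k) ≠ N.simple w := by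
    intro k w hw
    rcases hv' k with h | h
    · refine end_ne N (v k) ⟨1, by omega⟩ ?_ ?_ w hw
      · intro hc; have := congrArg Fin.val hc; simp only at this; omega
      · intro w h3 h4
        apply hN.2
        have h5 : w.1 ≠ (v k).1 := fun h => h3 (Fin.ext h)
        have h6 : w.1 ≠ 1 := fun h => h4 (Fin.ext h)
        omega
    · refine end_ne N (v k) ⟨n + 1, by omega⟩ ?_ ?_ w hw
      · intro hc; have := congrArg Fin.val hc; simp only at this; omega
      · intro w h3 h4
        rw [N.symmetric]
        apply hN.2
        have h5 : w.1 ≠ (v k).1 := fun h => h3 (Fin.ext h)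
        have h6 : w.1 ≠ n + 1 := fun h => h4 (Fin.ext h)
        omega
  refine dinf_inj hA M f (fun k => decide ((v k : ℕ) = 0)) ?_ ?_ ?_
  · intro k k' h
    simp only [decide_eq_decide] at h
    apply hv
    apply Fin.ext
    rcases hv' k with h3 | h3 <;> rcases hv' k' with h4 | h4 <;> omega
  · intro k
    rw [hf]
    rcases hv' k with h3 | h3
    · have h4 := h1 true ⟨0, by simp [pk]⟩
      have h5 : pe (n + 1) true ⟨0, by simp [pk]⟩ = v k := Fin.ext (by simp [pe, h3])
      rw [h5] at h4
      simpa [h3] using h4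
    · have h4 := h1 false ⟨1, by simp [pk]⟩
      have h5 : pe (n + 1) false ⟨1, by simp [pk]⟩ = v k := Fin.ext (by simp [pe, h3])
      rw [h5] at h4
      simpa [h3] using h4
  · rintro k ⟨x, hx⟩
    rw [hf] at hx
    rcases rank_one_elems _ x with rfl | rfl
    · rw [map_one] at hx
      exact cox_ne_one N _ hx.symm
    · rw [h2] at hx
      refine hne k _ ?_ hx.symm
      intro hc
      have h3 : n + 1 = (v k).1 := congrArg Fin.val hc
      rcases hv' k with h4 | h4 <;> omega

end path

section cyc

/-- The Coxeter matrix of a cycle. -/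
def IsCycM {m : ℕ} (M : CoxeterMatrix (Fin (m + 4))) : Prop :=
  (∀ i j : Fin (m + 4), ((i : ℕ) + 1 = j ∨ ((i : ℕ) = 0 ∧ (j : ℕ) = m + 3)) → M i j ≠ 0) ∧
  (∀ i j : Fin (m + 4), (i : ℕ) + 1 < j → ¬ ((i : ℕ) = 0 ∧ (j : ℕ) = m + 3) → M i j = 0)

/-- Sizes of the two pieces of a cycle. -/
def ck (m : ℕ) : Bool → ℕ
  | true => 3
  | false => m + 3

/-- Embeddings of the two pieces of a cycle. -/
def ce (m : ℕ) : ∀ b : Bool, Fin (ck m b) → Fin (m + 4)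
  | true => fun k => ⟨k.1, by have := k.2; simp only [ck] at this; omega⟩
  | false => fun k => ⟨if k.1 = m + 2 then 0 else k.1 + 2, by
      have := k.2; simp only [ck] at this; split <;> omega⟩

/-- Embeddings of the common vertices. -/
def cj (m : ℕ) : ∀ b : Bool, Fin 2 → Fin (ck m b)
  | true => fun k => ⟨2 * k.1, by simp only [ck]; omega⟩
  | false => fun k => ⟨if k.1 = 0 then m + 2 else 0, by simp only [ck]; split <;> omega⟩

/-- The common vertices. -/
def ce0 (m : ℕ) : Fin 2 → Fin (m + 4) := fun k => ⟨2 * k.1, by omega⟩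

theorem ce_inj (m : ℕ) (b : Bool) : Function.Injective (ce m b) := by
  intro x y h
  have hx := x.2
  have hy := y.2
  cases b
  · simp only [ce, Fin.mk.injEq, ck] at *
    apply Fin.ext
    split at h <;> split at h <;> omega
  · simp only [ce, Fin.mk.injEq, ck] at *
    exact Fin.ext h

theorem ce0_inj (m : ℕ) : Function.Injective (ce0 m) := by
  intro x y h
  simp only [ce0, Fin.mk.injEq] at h
  exact Fin.ext (by omega)

theorem cj_spec (m : ℕ) (i : Bool) (b : Fin 2) : ce m i (cj m i b) = ce0 m b := by
  have hb := b.2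
  cases i
  · apply Fin.ext
    simp only [ce, cj, ce0]
    split <;> split at * <;> omega
  · rfl

theorem c_cov (m : ℕ) (b : Fin (m + 4)) : ∃ i a, ce m i a = b := by
  by_cases h : b.1 ≤ 2
  · exact ⟨true, ⟨b.1, by simp only [ck]; omega⟩, rfl⟩
  · exact ⟨false, ⟨b.1 - 2, by simp only [ck]; omega⟩, by
      apply Fin.ext; simp only [ce]; split <;> omega⟩

theorem c_int (m : ℕ) (i i' : Bool) (a : Fin (ck m i)) (a' : Fin (ck m i')) (hi : i ≠ i')
    (h : ce m i a = ce m i' a') : ∃ c, ce0 m c = ce m i a := by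
  have ha := a.2
  have ha' := a'.2
  have h1 := congrArg Fin.val h
  have h2 : (ce m i a).1 = 0 ∨ (ce m i a).1 = 2 := by
    cases i <;> cases i'
    · exact absurd rfl hi
    · simp only [ck] at ha ha'
      simp only [ce] at h1 ⊢
      clear h
      split at h1 <;> split <;> omega
    · simp only [ck] at ha ha'
      simp only [ce] at h1 ⊢
      clear h
      split at h1 <;> omega
    · exact absurd rfl hi
  rcases h2 with h2 | h2
  · exact ⟨0, Fin.ext (by rw [h2]; rfl)⟩
  · exact ⟨1, Fin.ext (by rw [h2]; rfl)⟩

theorem c_M' {m : ℕ} (M : CoxeterMatrix (Fin (m + 4))) (hM : IsCycM M) (b b' : Fin (m + 4))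
    (hb : b.1 ≤ b'.1) (h : M b b' ≠ 0) : ∃ i a a', ce m i a = b ∧ ce m i a' = b' := by
  have h1 : b'.1 ≤ b.1 + 1 ∨ (b.1 = 0 ∧ b'.1 = m + 3) := by
    by_contra hc
    exact h (hM.2 b b' (by omega) (by omega))
  by_cases h2 : b'.1 ≤ 2
  · exact ⟨true, ⟨b.1, by simp only [ck]; omega⟩, ⟨b'.1, by simp only [ck]; omega⟩, rfl, rfl⟩
  · by_cases h3 : b.1 = 0
    · exact ⟨false, ⟨m + 2, by simp only [ck]; omega⟩, ⟨b'.1 - 2, by simp only [ck]; omega⟩,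
        by apply Fin.ext; simp only [ce, if_true]; omega,
        by apply Fin.ext; simp only [ce]; split <;> omega⟩
    · exact ⟨false, ⟨b.1 - 2, by simp only [ck]; omega⟩, ⟨b'.1 - 2, by simp only [ck]; omega⟩,
        by apply Fin.ext; simp only [ce]; split <;> omega,
        by apply Fin.ext; simp only [ce]; split <;> omega⟩

theorem c_M {m : ℕ} (M : CoxeterMatrix (Fin (m + 4))) (hM : IsCycM M) (b b' : Fin (m + 4))
    (h : M b b' ≠ 0) : ∃ i a a', ce m i a = b ∧ ce m i a' = b' := by
  rcases le_total b.1 b'.1 with hb | hb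
  · exact c_M' M hM b b' hb h
  · obtain ⟨i, a, a', h1, h2⟩ := c_M' M hM b' b hb (by rwa [M.symmetric])
    exact ⟨i, a', a, h2, h1⟩

theorem coh_cycle (m : ℕ) (M : CoxeterMatrix (Fin (m + 4))) (hM : IsCycM M) : Coh M.Group := by
  have hp1 : IsPathM (n := 3) (M.pull (ce m true) (ce_inj m true)) := by
    constructor
    · intro i j hij
      exact hM.1 _ _ (Or.inl hij)
    · intro i j hij
      refine hM.2 _ _ hij ?_
      rintro ⟨-, h⟩
      have h1 : j.1 = m + 3 := h
      have := j.2
      omega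
  have hp2 : IsPathM (n := m + 3) (M.pull (ce m false) (ce_inj m false)) := by
    constructor
    · intro i j hij
      have hj := j.2
      change M (ce m false i) (ce m false j) ≠ 0
      by_cases hl : j.1 = m + 2
      · rw [M.symmetric]
        refine hM.1 _ _ (Or.inr ?_)
        simp only [ce]
        rw [if_pos hl, if_neg (by omega)]
        omega
      · refine hM.1 _ _ (Or.inl ?_)
        simp only [ce]
        rw [if_neg hl, if_neg (by omega)]
        omega
    · intro i j hij
      have hj := j.2
      change M (ce m false i) (ce m false j) = 0
      by_cases hl : j.1 = m + 2
      · rw [M.symmetric]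
        refine hM.2 _ _ ?_ ?_ <;>
        · simp only [ce]
          rw [if_pos hl, if_neg (by omega)]
          omega
      · refine hM.2 _ _ ?_ ?_ <;>
        · simp only [ce]
          rw [if_neg hl, if_neg (by omega)]
          omega
  refine cox_coh M (ce m) (ce_inj m) (cj m) (ce0 m) (ce0_inj m) (cj_spec m) (c_cov m) (c_int m)
      (c_M M hM) ?_ ?_ ?_
  · intro i φ hφ
    have hji : Function.Injective (cj m i) := by
      intro x y h
      apply ce0_inj m
      rw [← cj_spec m i, ← cj_spec m i, h]
    cases i with
    | true =>
      refine path_ends_inj 0 _ hp1 _ φ (cj m true) hji ?_ hφ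
      intro k
      simp only [cj]
      omega
    | false =>
      refine path_ends_inj m _ hp2 _ φ (cj m false) hji ?_ hφ
      intro k
      simp only [cj]
      split <;> omega
  · intro i
    cases i with
    | true => exact coh_path 2 _ hp1
    | false => exact coh_path (m + 2) _ hp2
  · exact rank_two_slender _

end cyc

theorem cycle_adj_val (m : ℕ) (i j : Fin (m + 4)) (h : i.1 < j.1) :
    (SimpleGraph.cycleGraph (m + 4)).Adj i j ↔
      ((i : ℕ) + 1 = j ∨ ((i : ℕ) = 0 ∧ (j : ℕ) = m + 3)) := by
  rw [SimpleGraph.cycleGraph_adj']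
  have h1 : (j - i).val = j.1 - i.1 := Fin.coe_sub_iff_le.2 (Fin.le_def.2 h.le)
  have h2 : (i - j).val = m + 4 + i.1 - j.1 := Fin.coe_sub_iff_lt.2 (Fin.lt_def.2 h)
  have := j.2
  rw [h1, h2]
  omega

/-- If the Coxeter graph `Γ` (with edge labels in `{2,3,4,...}` recorded by
the Coxeter matrix `M`) is a cycle of length greater than `3`, then the Coxeter group `C(Γ)`
is coherent. -/
theorem coxeterGroup_coherent_of_isCycleGT3
    {V : Type} [Fintype V] (Γ : SimpleGraph V) (M : CoxeterMatrix V)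
    (hM : M.IsMatrixOf Γ)
    (hcycle : ∃ n : ℕ, 4 ≤ n ∧ Nonempty (Γ ≃g SimpleGraph.cycleGraph n)) :
    Group.Coherent M.Group := by
  obtain ⟨n, hn, ⟨e⟩⟩ := hcycle
  obtain ⟨m, rfl⟩ := Nat.exists_eq_add_of_le' hn
  have hadj : ∀ i j, Γ.Adj (e.symm i) (e.symm j) ↔ (SimpleGraph.cycleGraph (m + 4)).Adj i j :=
    fun i j => e.symm.map_adj_iff
  have hc : IsCycM (M.reindex e.toEquiv) := by
    constructor
    · intro i j hij
      have h2 := hM.1 _ _ ((hadj i j).2 ((cycle_adj_val m i j (by omega)).2 hij))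
      have h3 : M.reindex e.toEquiv i j = M (e.symm i) (e.symm j) := rfl
      rw [h3]
      omega
    · intro i j hij hn
      refine hM.2 (e.symm i) (e.symm j) ?_ ?_
      · intro h
        have := e.symm.injective h
        subst this
        omega
      · rw [hadj, cycle_adj_val m i j (by omega)]
        omega
  have hcoh := coh_cycle m _ hc
  intro H hH
  have hfp : Group.IsFinitelyPresented H :=
    coh_map (M.reindexGroupEquiv e.toEquiv).toMonoidHom
      (M.reindexGroupEquiv e.toEquiv).injective hcoh H
      (fun x _ => (M.reindexGroupEquiv e.toEquiv).surjective x) hH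
  obtain ⟨k, s, hs, ⟨f⟩⟩ := hfp.exists_mulEquiv_presentedGroup
  exact ⟨k, s, hs, ⟨f.symm⟩⟩
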